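/- Classification of random sets by likelihood ratio: for computable probabilities P and Q on (Ω,B), (a) R^P ∩ R^Q = R^P ∩ {x∞ : 0 < lim_{x→x∞} r(x) < ∞}; and (b) R^P ∩ (R^Q)^c = R^P ∩ {x∞ : lim_{x→x∞} r(x) = 0}, where r(x) := Q(x)/P(x) if P(x) > 0 and r(x) := 0 otherwise, and the limit is taken along prefixes x of x∞. -/

import Mathlib

/-!
The likelihood ratio `r = Q / P` along the prefixes of a sequence is a nonnegative `P`-martingale, and
the classical convergence proof can be made effective: each exceptional event is covered by a
Martin-Löf test, so a `P`-random sequence `ω` avoids it.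

* `P(x) > 0` for every prefix `x` of `ω`, so no division by zero occurs (`not_random_of_null`).
* `r` is bounded along `ω`, by the maximal inequality (`not_random_of_ratio_unbounded`).
* `r` does not cross any interval of positive rationals infinitely often
  (`not_random_of_oscillation`): the set where `r` goes below `a / c` and then above `b / c`, `k`
  times over, has `P`-probability at most `(a / b) ^ k`.

Hence `r` has a finite limit `L ≥ 0` along `ω` (`exists_tendsto`). If `L > 0`, then `P ≤ 2 ^ k * Q` on
all long prefixes of `ω`, so a `Q`-test catching `ω`, restricted to strings with this inequality, turns
into a `P`-test catching `ω`; thus `ω` is `Q`-random (`random_of_ratio_pos`). If `L = 0`, then `P / Q`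
is unbounded along `ω`, and the maximal inequality with the roles of `P` and `Q` exchanged shows that
`ω` is not `Q`-random. Both parts of the theorem follow.

All the probability estimates come from one comparison, `hull_real_le`: an inequality
`c * μ ≤ d * ν` on the cylinders of a set of strings holds for the union of these cylinders, since
this union is the disjoint union of the cylinders of the minimal strings.

Effectiveness: strict inequalities between cylinder probabilities are semidecidable. The computable
rational approximations are turned into natural numbers, of bounded error at scale `2 ^ s`, after
proving that numerators and denominators are computable from Mathlib's numbering of `ℚ`
(`computable_ratCode`); `cert` compares these numbers. A `cert` inequality is sound at every
precision and complete for strict inequalities at high precision. Finally,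
`not_random_of_weak_test` removes the nestedness and the strict bound from the tests to be built.
-/

open MeasureTheory Filter Set
open scoped ENNReal NNReal

namespace AlgRand

/-- `S` : finite binary strings. -/
abbrev S : Type := List Bool

/-- `Seq` : infinite binary sequences (the space Ω). -/
abbrev Seq : Type := ℕ → Bool

/-- A finite string is a prefix of an infinite sequence. -/
def PrefixSeq (x : S) (ω : Seq) : Prop := ∀ i : Fin x.length, x.get i = ω i

/-- The first `n` bits of an infinite sequence. -/
def seqTake (ω : Seq) (n : ℕ) : S := List.ofFn fun i : Fin n => ω i

/-- Cylinder set Δ(x) ⊆ Ω. -/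
def cyl (x : S) : Set Seq := {ω | PrefixSeq x ω}

/-- Product cylinder Δ(x,y) ⊆ Ω². -/
def cyl2 (xy : S × S) : Set (Seq × Seq) := cyl xy.1 ×ˢ cyl xy.2

/-- Prefix (partial order) on S². -/
def Pre2 (a b : S × S) : Prop := a.1 <+: b.1 ∧ a.2 <+: b.2

/-- A pair of strings is a (strict) prefix of a pair of sequences. -/
def Pre2Seq (a : S × S) (ω : Seq × Seq) : Prop := PrefixSeq a.1 ω.1 ∧ PrefixSeq a.2 ω.2

/-- Recursively enumerable subset of a primcodable type. -/
def RESet {β : Type} [Primcodable β] (A : Set β) : Prop :=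
  ∃ f : ℕ → Option β, Computable f ∧ A = {a | ∃ n, f n = some a}

/-- A computable probability measure on Ω. -/
def ComputableProb (P : Measure Seq) : Prop :=
  IsProbabilityMeasure P ∧
    ∃ p : S × ℕ → ℚ, Computable p ∧
      ∀ (x : S) (k : ℕ), 0 < k → |(P (cyl x)).toReal - (p (x, k) : ℝ)| < 1 / k

/-- A computable probability measure on Ω². -/
def ComputableProb2 (P : Measure (Seq × Seq)) : Prop :=
  IsProbabilityMeasure P ∧
    ∃ p : (S × S) × ℕ → ℚ, Computable p ∧
      ∀ (xy : S × S) (k : ℕ), 0 < k → |(P (cyl2 xy)).toReal - (p (xy, k) : ℝ)| < 1 / k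

/-- Ũ_n, the open set covered by the n-th level of a test. -/
def testUnion {α β : Type} (C : β → Set α) (U : Set (ℕ × β)) (n : ℕ) : Set α :=
  ⋃ x ∈ {x | (n, x) ∈ U}, C x

/-- Martin-Löf test w.r.t. a measure, generic in the cylinder function `C`. -/
def IsMLTest {α β : Type} [MeasurableSpace α] [Primcodable β]
    (C : β → Set α) (P : Measure α) (U : Set (ℕ × β)) : Prop :=
  RESet U ∧ (∀ n, testUnion C U (n + 1) ⊆ testUnion C U n) ∧
    ∀ n, P (testUnion C U n) < (2⁻¹ : ℝ≥0∞) ^ n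

/-- Martin-Löf randomness: ω avoids the limit of every test. -/
def MLRandom {α β : Type} [MeasurableSpace α] [Primcodable β]
    (C : β → Set α) (P : Measure α) (ω : α) : Prop :=
  ∀ U, IsMLTest C P U → ω ∉ ⋂ n, testUnion C U n

/-- ω ∈ R^P, for P on Ω. -/
abbrev Random1 (P : Measure Seq) (ω : Seq) : Prop := MLRandom cyl P ω

/-- ω ∈ R^P, for P on Ω². -/
abbrev Random2 (P : Measure (Seq × Seq)) (ω : Seq × Seq) : Prop := MLRandom cyl2 P ω

/-- Marginal distribution P_X on the first coordinate. -/
noncomputable def margX (P : Measure (Seq × Seq)) : Measure Seq := P.map Prod.fst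

/-- Marginal distribution P_Y on the second coordinate. -/
noncomputable def margY (P : Measure (Seq × Seq)) : Measure Seq := P.map Prod.snd

/-- Conditional probability P(x|y) = P(x,y)/P_Y(y), with value 0 when P_Y(y) = 0. -/
noncomputable def condP (P : Measure (Seq × Seq)) (x y : S) : ℝ :=
  (P (cyl2 (x, y))).toReal / (P (Set.univ ×ˢ cyl y)).toReal

/-- P(x|yinf) := lim_{y → yinf} P(x|y) along prefixes of yinf (junk value if no limit). -/
noncomputable def condPLim (P : Measure (Seq × Seq)) (x : S) (yinf : Seq) : ℝ :=
  limUnder atTop fun m => condP P x (seqTake yinf m)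

/-- Conditional probability P(y|x) = P(x,y)/P_X(x), with value 0 when P_X(x) = 0. -/
noncomputable def condX (P : Measure (Seq × Seq)) (y x : S) : ℝ :=
  (P (cyl2 (x, y))).toReal / (P (cyl x ×ˢ Set.univ)).toReal

/-- P(y|xinf) := lim_{x → xinf} P(y|x) along prefixes of xinf (junk value if no limit). -/
noncomputable def condXLim (P : Measure (Seq × Seq)) (y : S) (xinf : Seq) : ℝ :=
  limUnder atTop fun m => condX P y (seqTake xinf m)

/-- The set S ∪ Ω of finite or infinite binary sequences. -/
inductive SW : Type where
  | fin : S → SW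
  | inf : Seq → SW

/-- Prefix order ⊑ on S ∪ Ω. -/
def SW.le : SW → SW → Prop
  | .fin x, .fin y => x <+: y
  | .fin x, .inf ω => PrefixSeq x ω
  | .inf ω, .inf ω' => ω = ω'
  | .inf _, .fin _ => False

/-- (S ∪ Ω)². -/
abbrev SW2 : Type := SW × SW

/-- Componentwise prefix order ⊑ on (S ∪ Ω)². -/
def SW2.le (a b : SW2) : Prop := SW.le a.1 b.1 ∧ SW.le a.2 b.2

/-- Length |x| ∈ ℕ∞ of an element of S ∪ Ω. -/
def SW.len : SW → ℕ∞
  | .fin x => (x.length : ℕ∞)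
  | .inf _ => ⊤

/-- |p| = |p₁| + |p₂| for p ∈ (S ∪ Ω)². -/
def SW2.len (a : SW2) : ℕ∞ := SW.len a.1 + SW.len a.2

/-- Δ(x) for x ∈ S ∪ Ω. -/
def SW.cylW : SW → Set Seq
  | .fin x => cyl x
  | .inf ω => {ω}

/-- Δ(x,y) for (x,y) ∈ (S ∪ Ω)². -/
def SW2.cylW (a : SW2) : Set (Seq × Seq) := SW.cylW a.1 ×ˢ SW.cylW a.2

/-- Embedding S → S ∪ Ω. -/
def emb1 (x : S) : SW := SW.fin x

/-- Embedding S² → (S ∪ Ω)². -/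
def emb2 (p : S × S) : SW2 := (SW.fin p.1, SW.fin p.2)

/-- Embedding Ω² → (S ∪ Ω)². -/
def inf2 (ω : Seq × Seq) : SW2 := (SW.inf ω.1, SW.inf ω.2)

/-- Least upper bound with respect to a relation. -/
def IsSupRel {V : Type} (le : V → V → Prop) (A : Set V) (s : V) : Prop :=
  (∀ a ∈ A, le a s) ∧ ∀ b, (∀ a ∈ A, le a b) → le s b

/-- `f` is a computable monotone function defined by an r.e. set `F` satisfying
condition (3) of the paper:  (λ,λ) ∈ F_p and ⋁_{p'⊑p} F_{p'} exists for every p,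
and f(q) = ⋁ {x : ∃ p' ⊑ q, (p',x) ∈ F}. -/
def CompMono {D E : Type} {W V : Type} [Primcodable D] [Primcodable E]
    (embD : D → W) (leW : W → W → Prop) (embE : E → V) (leV : V → V → Prop)
    (eps : E) (f : W → V) : Prop :=
  ∃ F : Set (D × E), RESet F ∧
    (∀ p : D, (p, eps) ∈ F ∧
        ∃ s, IsSupRel leV (embE '' {x | ∃ p' : D, leW (embD p') (embD p) ∧ (p', x) ∈ F}) s) ∧
    ∀ q : W, IsSupRel leV (embE '' {x | ∃ p' : D, leW (embD p') q ∧ (p', x) ∈ F}) (f q)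

/-- Computable monotone function (S ∪ Ω)² → (S ∪ Ω)². -/
def CompMono22 (f : SW2 → SW2) : Prop := CompMono emb2 SW2.le emb2 SW2.le (([], []) : S × S) f

/-- Computable monotone function S ∪ Ω → (S ∪ Ω)². -/
def CompMono12 (g : SW → SW2) : Prop := CompMono emb1 SW.le emb2 SW2.le (([], []) : S × S) g

/-- Computable monotone function (S ∪ Ω)² → S ∪ Ω. -/
def CompMono21 (e : SW2 → SW) : Prop := CompMono emb2 SW2.le emb1 SW.le ([] : S) e

/-- Computable monotone function S ∪ Ω → S ∪ Ω. -/
def CompMono11 (ρ : SW → SW) : Prop := CompMono emb1 SW.le emb1 SW.le ([] : S) ρ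

/-- Km²_f(x) := min{|p₁|+|p₂| : x ⊑ f(p₁,p₂)} ∈ ℕ∞. -/
noncomputable def Km2 (f : SW2 → SW2) (x : SW2) : ℕ∞ :=
  ⨅ (p : SW2) (_ : SW2.le x (f p)), SW2.len p

/-- Km_f(x) := min{|p| : x ⊑ f(p,λ)} ∈ ℕ∞. -/
noncomputable def Km1 (f : SW2 → SW2) (x : SW2) : ℕ∞ :=
  ⨅ (p : SW) (_ : SW2.le x (f (p, SW.fin []))), SW.len p

/-- Km(x|y) := min{|p| : (x,λ) ⊑ u(p,y)} ∈ ℕ∞. -/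
noncomputable def KmCond (u : SW2 → SW2) (x y : SW) : ℕ∞ :=
  ⨅ (p : SW) (_ : SW2.le (x, SW.fin []) (u (p, y))), SW.len p

/-- Km_g(x) := min{|p| : x ⊑ g(p)} for g : S ∪ Ω → (S ∪ Ω)². -/
noncomputable def KmOf12 (g : SW → SW2) (x : SW2) : ℕ∞ :=
  ⨅ (p : SW) (_ : SW2.le x (g p)), SW.len p

/-- Optimality of a computable monotone function on (S ∪ Ω)². -/
def Optimal (u : SW2 → SW2) : Prop :=
  CompMono22 u ∧
    ∀ f : SW2 → SW2, CompMono22 f → ∃ c : ℕ, ∀ x : SW2, Km2 u x ≤ Km2 f x + (c : ℕ∞)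

/-- 2^{-n} for n ∈ ℕ∞ (with 2^{-∞} = 0), as an extended nonnegative real. -/
noncomputable def tpow (n : ℕ∞) : ℝ≥0∞ := if n = ⊤ then 0 else (2⁻¹ : ℝ≥0∞) ^ n.toNat

/-- Non-overlapping subset of (S ∪ Ω)². -/
def NonOverlapW (A : Set SW2) : Prop := A.Pairwise fun a b => SW2.cylW a ∩ SW2.cylW b = ∅

/-- Non-overlapping subset of S². -/
def NonOverlapF (A : Set (S × S)) : Prop := A.Pairwise fun a b => cyl2 a ∩ cyl2 b = ∅

/-- Condition (4): any two members of A are comparable or have disjoint cylinders. -/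
def Cond4 (A : Set (S × S)) : Prop :=
  ∀ a ∈ A, ∀ b ∈ A, Pre2 a b ∨ Pre2 b a ∨ cyl2 a ∩ cyl2 b = ∅

/-- Condition (5): relative complements of cylinders are non-overlapping unions within A. -/
def Cond5 (A : Set (S × S)) : Prop :=
  ∀ a ∈ A, ∀ b ∈ A, ∃ α ⊆ A, NonOverlapF α ∧ cyl2 a ∩ (cyl2 b)ᶜ = ⋃ z ∈ α, cyl2 z

/-- A(xinf) := {x ∈ A | x ⊏ xinf}. -/
def Asec (A : Set (S × S)) (ω : Seq × Seq) : Set (S × S) := {a ∈ A | Pre2Seq a ω}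

/-- sup_{x ∈ A} (−log P(x) − K(x)) < ∞. -/
def KmBound (P : Measure (Seq × Seq)) (K : S × S → ℕ∞) (A : Set (S × S)) : Prop :=
  ∃ c : ℝ, ∀ x ∈ A, ∀ k : ℕ, K x = (k : ℕ∞) →
    0 < P (cyl2 x) ∧ -Real.logb 2 ((P (cyl2 x)).toReal) ≤ (k : ℝ) + c

/-- sup_{x ∈ A} |log P(x) + K(x)| < ∞. -/
def KmBoundAbs (P : Measure (Seq × Seq)) (K : S × S → ℕ∞) (A : Set (S × S)) : Prop :=
  ∃ c : ℝ, ∀ x ∈ A, ∃ k : ℕ, K x = (k : ℕ∞) ∧ 0 < P (cyl2 x) ∧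
    |Real.logb 2 ((P (cyl2 x)).toReal) + (k : ℝ)| ≤ c

/-- The conditional probability P(·|yinf) is computable relative to the oracle yinf:
there is a partial computable A(x,y,k), monotone in y, approximating P(x|yinf)
to within 1/k along prefixes y of yinf. -/
def CondComputableAt (P : Measure (Seq × Seq)) (yinf : Seq) : Prop :=
  ∃ A : (S × S) × ℕ →. ℚ, Partrec A ∧
    (∀ (x y z : S) (k : ℕ) (q : ℚ), q ∈ A ((x, y), k) → y <+: z → q ∈ A ((x, z), k)) ∧
    ∀ (x : S) (k : ℕ), 0 < k → ∃ (m : ℕ) (q : ℚ), q ∈ A ((x, seqTake yinf m), k) ∧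
      |condPLim P x yinf - (q : ℝ)| < 1 / k

/-- A Martin-Löf test w.r.t. Q which is r.e. relative to the oracle yinf. -/
def RelMLTest (Q : Measure Seq) (yinf : Seq) (U : ℕ → Set S) : Prop :=
  (∃ B : (ℕ × ℕ) × S →. S, Partrec B ∧
      (∀ (i n : ℕ) (y z x : S), x ∈ B ((i, n), y) → y <+: z → x ∈ B ((i, n), z)) ∧
      ∀ n, U n = {x | ∃ i m, x ∈ B ((i, n), seqTake yinf m)}) ∧
  (∀ n, (⋃ x ∈ U (n + 1), cyl x) ⊆ ⋃ x ∈ U n, cyl x) ∧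
  ∀ n, Q (⋃ x ∈ U n, cyl x) < (2⁻¹ : ℝ≥0∞) ^ n

/-- Martin-Löf randomness w.r.t. Q relative to the oracle yinf. -/
def RelMLRandom (Q : Measure Seq) (yinf xinf : Seq) : Prop :=
  ∀ U, RelMLTest Q yinf U → xinf ∉ ⋂ n, ⋃ x ∈ U n, cyl x

/-- Likelihood ratio r(x) = Q(x)/P(x), with value 0 when P(x) = 0. -/
noncomputable def ratio (P Q : Measure Seq) (x : S) : ℝ :=
  (Q (cyl x)).toReal / (P (cyl x)).toReal

/-- P(·|yinf) f,(xinf,yinf)-effectively converges with rate g. -/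
def EffConv (P : Measure (Seq × Seq)) (xinf yinf : Seq) (f : ℕ → ℚ) (g : ℕ → ℕ) : Prop :=
  Computable g ∧ Monotone g ∧
    ∀ x y : S, PrefixSeq x xinf → PrefixSeq y yinf → g x.length ≤ y.length →
      |condP P x y / condPLim P x yinf - 1| < (f x.length : ℝ)

/-- A_g(xinf,yinf) := {(x,y) : |y| = g(|x|), (x,y) ⊏ (xinf,yinf)}. -/
def AgSec (g : ℕ → ℕ) (xinf yinf : Seq) : Set (S × S) :=
  {xy | xy.2.length = g xy.1.length ∧ PrefixSeq xy.1 xinf ∧ PrefixSeq xy.2 yinf}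

/-- A uniformly computable family of probability measures on Ω. -/
def UnifComputableFam (Pn : ℕ → Measure Seq) : Prop :=
  (∀ n, IsProbabilityMeasure (Pn n)) ∧
    ∃ A : (ℕ × S) × ℕ → ℚ, Computable A ∧
      ∀ (n : ℕ) (x : S) (k : ℕ), 0 < k →
        |(A ((n, x), k) : ℝ) - ((Pn n) (cyl x)).toReal| < 1 / k

/-- A computable sequence of reals (e.g. a computable probability on ℕ). -/
def ComputableRealSeq (α : ℕ → ℝ) : Prop :=
  ∃ a : ℕ × ℕ → ℚ, Computable a ∧ ∀ (n k : ℕ), 0 < k → |α n - (a (n, k) : ℝ)| < 1 / k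

/-- The mixture Σ_n α(n) P_n. -/
noncomputable def mixture (α : ℕ → ℝ) (Pn : ℕ → Measure Seq) : Measure Seq :=
  Measure.sum fun n => ENNReal.ofReal (α n) • Pn n

/-- The conditional probability measure P(·|y) on Ω, for a finite string y. -/
noncomputable def condMeasGivenY (P : Measure (Seq × Seq)) (y : S) : Measure Seq :=
  (P (Set.univ ×ˢ cyl y))⁻¹ • ((P.restrict (Set.univ ×ˢ cyl y)).map Prod.fst)

/-- The posterior distribution P_{Y|X}(·|x) on Ω, for a finite string x. -/
noncomputable def postMeas (P : Measure (Seq × Seq)) (x : S) : Measure Seq :=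
  (P (cyl x ×ˢ Set.univ))⁻¹ • ((P.restrict (cyl x ×ˢ Set.univ)).map Prod.snd)

/-! ### Cylinders and weak tests -/

lemma length_seqTake (ω : Seq) (n : ℕ) : (seqTake ω n).length = n := by simp [seqTake]

lemma mem_cyl_iff {x : S} {ω : Seq} : ω ∈ cyl x ↔ seqTake ω x.length = x := by
  constructor
  · intro h
    refine List.ext_getElem (length_seqTake _ _) fun i h1 h2 => ?_
    have := h ⟨i, h2⟩
    simp only [seqTake, List.getElem_ofFn]
    simpa using this.symm
  · intro h i
    have h2 : x.get i = (seqTake ω x.length)[(i : ℕ)]'(by rw [length_seqTake]; exact i.2) := by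
      simp [h]
    rw [h2]; simp [seqTake]

lemma mem_cyl_seqTake (ω : Seq) (n : ℕ) : ω ∈ cyl (seqTake ω n) := by
  rw [mem_cyl_iff, length_seqTake]

lemma seqTake_take (ω : Seq) {m n : ℕ} (h : m ≤ n) : (seqTake ω n).take m = seqTake ω m := by
  refine List.ext_getElem (by simp [length_seqTake, h]) fun i h1 h2 => ?_
  simp [seqTake]

lemma seqTake_prefix (ω : Seq) {m n : ℕ} (h : m ≤ n) : seqTake ω m <+: seqTake ω n := by
  rw [← seqTake_take ω h]; exact List.take_prefix _ _

lemma cyl_anti {x y : S} (h : x <+: y) : cyl y ⊆ cyl x := by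
  intro ω hω
  rw [mem_cyl_iff] at hω ⊢
  rw [← hω] at h
  have h1 := List.prefix_iff_eq_take.1 h
  rw [seqTake_take] at h1
  · exact h1.symm
  · simpa [length_seqTake] using h.length_le

lemma measurableSet_cyl (x : S) : MeasurableSet (cyl x) := by
  have : cyl x = ⋂ i : Fin x.length, (fun ω : Seq => ω i) ⁻¹' {x.get i} := by
    ext ω; simp [cyl, PrefixSeq, eq_comm]
  rw [this]
  exact MeasurableSet.iInter fun i => measurable_pi_apply _ (measurableSet_singleton _)

/-- The open set generated by a set of strings. -/
def hull (Y : Set S) : Set Seq := ⋃ x ∈ Y, cyl x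

lemma mem_hull {Y : Set S} {ω : Seq} : ω ∈ hull Y ↔ ∃ n, seqTake ω n ∈ Y := by
  simp only [hull, mem_iUnion, exists_prop]
  constructor
  · rintro ⟨x, hx, h⟩
    exact ⟨x.length, by rwa [mem_cyl_iff.1 h]⟩
  · rintro ⟨n, hn⟩
    exact ⟨_, hn, mem_cyl_seqTake _ _⟩

/-- The minimal strings of `Y` generate the same open set and have disjoint cylinders. -/
lemma exists_antichain (Y : Set S) : ∃ Z ⊆ Y, hull Z = hull Y ∧ Z.PairwiseDisjoint cyl := by
  classical
  refine ⟨{y ∈ Y | ∀ z ∈ Y, z <+: y → z = y}, fun y hy => hy.1, ?_, ?_⟩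
  · ext ω
    rw [mem_hull, mem_hull]
    refine ⟨fun ⟨n, hn⟩ => ⟨n, hn.1⟩, fun h => ⟨Nat.find h, Nat.find_spec h, fun z hz hzp => ?_⟩⟩
    have hz2 : seqTake ω z.length = z :=
      mem_cyl_iff.1 (cyl_anti hzp (mem_cyl_seqTake _ _))
    have h1 : Nat.find h ≤ z.length := Nat.find_min' h (by rwa [hz2])
    refine hzp.eq_of_length_le ?_
    rwa [length_seqTake]
  · intro x hx y hy hxy
    refine Set.disjoint_left.2 fun ω h1 h2 => hxy ?_
    rw [mem_cyl_iff] at h1 h2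
    rcases le_total x.length y.length with h | h
    · exact hy.2 x hx.1 (by rw [← h1, ← h2]; simpa [length_seqTake] using seqTake_prefix ω h)
    · exact (hx.2 y hy.1 (by rw [← h1, ← h2]; simpa [length_seqTake] using seqTake_prefix ω h)).symm

lemma hull_mono_measure (μ ν : Measure Seq) (Y : Set S)
    (h : ∀ y ∈ Y, μ (cyl y) ≤ ν (cyl y)) : μ (hull Y) ≤ ν (hull Y) := by
  obtain ⟨Z, hZ, e, hd⟩ := exists_antichain Y
  rw [← e]
  calc μ (hull Z) ≤ ∑' z : Z, μ (cyl z) := measure_biUnion_le _ (Set.to_countable _) _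
    _ ≤ ∑' z : Z, ν (cyl z) := ENNReal.tsum_le_tsum fun z => h _ (hZ z.2)
    _ = ν (hull Z) := (measure_biUnion (Set.to_countable _) hd fun z _ => measurableSet_cyl z).symm

/-- A multiplicative comparison of two measures on the cylinders of `Y` passes to the open set
generated by `Y`. With `d * ν ≤ d` this is the maximal inequality for likelihood ratios. -/
lemma hull_real_le (μ ν : Measure Seq) [IsFiniteMeasure μ] [IsFiniteMeasure ν] (c d : ℕ)
    (Y : Set S)
    (h : ∀ y ∈ Y, c * μ.real (cyl y) ≤ d * ν.real (cyl y)) :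
    c * μ.real (hull Y) ≤ d * ν.real (hull Y) := by
  have key := hull_mono_measure ((c : ℝ≥0) • μ) ((d : ℝ≥0) • ν) Y fun y hy => by
    rw [← ENNReal.toReal_le_toReal (measure_ne_top _ _) (measure_ne_top _ _)]
    simpa [Measure.real] using! h y hy
  rw [← ENNReal.toReal_le_toReal (measure_ne_top _ _) (measure_ne_top _ _)] at key
  simpa [Measure.real] using! key

/-- Non-randomness from a weak test: a semidecidable family of sets of strings (`x` belongs to level
`n` iff `g ((n, x), s)` holds at some stage `s`), whose levels need not be nested and have probability
at most `2 ^ (-n)` with equality allowed. The tail unions of the levels from `n + 2` on form a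
Martin-Löf test, because their probabilities add up to at most `2 ^ (-n - 1)`. -/
lemma not_random_of_weak_test {P : Measure Seq} [IsProbabilityMeasure P] {g : (ℕ × S) × ℕ → Bool}
    (hg : Computable g)
    (hU : ∀ n, P.real (hull {x | ∃ s, g ((n, x), s) = true}) ≤ (1 / 2) ^ n) {ω : Seq}
    (hω : ∀ n, ∃ j s, g ((n, seqTake ω j), s) = true) : ¬ Random1 P ω := by
  intro hR
  set V : Set (ℕ × S) := {a | ∃ m s, g ((a.1 + m + 2, a.2), s) = true} with hV
  have hun : ∀ n, testUnion cyl V n = ⋃ m, hull {x | ∃ s, g ((n + m + 2, x), s) = true} := by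
    intro n
    ext ω
    simp only [testUnion, hull, hV, mem_iUnion, mem_ofPred_eq, exists_prop]
    constructor
    · rintro ⟨x, ⟨m, s, h⟩, hx⟩; exact ⟨m, x, ⟨s, h⟩, hx⟩
    · rintro ⟨m, x, ⟨s, h⟩, hx⟩; exact ⟨x, ⟨m, s, h⟩, hx⟩
  refine hR V ⟨?_, ?_, ?_⟩ ?_
  · let f1 : (ℕ × S) × (ℕ × ℕ) → Option (ℕ × S) := fun a =>
      cond (g ((a.1.1 + a.2.1 + 2, a.1.2), a.2.2)) (some a.1) none
    have hadd : Computable (fun a : (ℕ × S) × (ℕ × ℕ) => a.1.1 + a.2.1 + 2) :=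
      (Primrec.nat_add.comp (Primrec.nat_add.comp (Primrec.fst.comp Primrec.fst)
        (Primrec.fst.comp Primrec.snd)) (Primrec.const 2)).to_comp
    have hf1 : Computable f1 := by
      refine Computable.cond (hg.comp ?_) (Computable.option_some.comp Computable.fst)
        (Computable.const none)
      exact (hadd.pair (Computable.snd.comp Computable.fst)).pair
        (Computable.snd.comp Computable.snd)
    refine ⟨fun c => (Encodable.decode (α := (ℕ × S) × (ℕ × ℕ)) c).bind f1,
      Computable.option_bind Computable.decode (hf1.comp Computable.snd).to₂, ?_⟩
    ext a
    simp only [hV, mem_ofPred_eq]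
    constructor
    · rintro ⟨m, s, h⟩
      refine ⟨Encodable.encode (a, (m, s)), ?_⟩
      rw [Encodable.encodek]
      simp [f1, h]
    · rintro ⟨c, hc⟩
      rw [Option.bind_eq_some_iff] at hc
      obtain ⟨b, -, hb⟩ := hc
      cases hgb : g ((b.1.1 + b.2.1 + 2, b.1.2), b.2.2) with
      | false => simp [f1, hgb] at hb
      | true =>
        simp only [f1, hgb, cond_true, Option.some.injEq] at hb
        exact ⟨b.2.1, b.2.2, by rw [← hb]; exact hgb⟩
  · intro n
    rw [hun, hun]
    refine iUnion_subset fun m => ?_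
    have : n + 1 + m + 2 = n + (m + 1) + 2 := by omega
    rw [this]
    exact subset_iUnion (fun m => hull {x | ∃ s, g ((n + m + 2, x), s) = true}) (m + 1)
  · intro n
    rw [hun]
    have hb : ∀ n, P (hull {x | ∃ s, g ((n, x), s) = true}) ≤ (2⁻¹ : ℝ≥0∞) ^ n := by
      intro n
      have := hU n
      rw [Measure.real] at this
      rw [← ENNReal.toReal_le_toReal (measure_ne_top _ _) (by simp)]
      simpa using this
    calc P (⋃ m, hull {x | ∃ s, g ((n + m + 2, x), s) = true})
        ≤ ∑' m, P (hull {x | ∃ s, g ((n + m + 2, x), s) = true}) := measure_iUnion_le _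
      _ ≤ ∑' m, (2⁻¹ : ℝ≥0∞) ^ (n + 2) * 2⁻¹ ^ m := ENNReal.tsum_le_tsum fun m =>
          (hb _).trans_eq (by rw [← pow_add]; congr 1; omega)
      _ = (2⁻¹ : ℝ≥0∞) ^ (n + 1) := by
          rw [ENNReal.tsum_mul_left, ENNReal.tsum_geometric, ENNReal.one_sub_inv_two, inv_inv,
            pow_succ _ (n + 1), mul_assoc, ENNReal.inv_mul_cancel (by simp) (by simp), mul_one]
      _ < (2⁻¹ : ℝ≥0∞) ^ n := by
          rw [pow_succ]
          conv_rhs => rw [← mul_one ((2⁻¹ : ℝ≥0∞) ^ n)]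
          exact ENNReal.mul_lt_mul_right (by simp) (by simp) (by simp)
  · simp only [hun, mem_iInter, mem_iUnion]
    intro n
    obtain ⟨j, s, h⟩ := hω (n + 0 + 2)
    exact ⟨0, mem_hull.2 ⟨j, s, h⟩⟩

/-! ### Numerators and denominators are computable -/

section RatCode

open Encodable Denumerable

/-- The code of a rational number as the pair of its numerator and denominator in lowest terms. It
is the function underlying Mathlib's `Encodable ℚ`; computability over `ℚ` is instead measured
through `Denumerable ℚ`, which numbers these codes consecutively. -/
def ratCode (q : ℚ) : ℕ := Nat.pair (encode q.num) q.den

/-- The natural number `c` is the code of some rational: its second component is positive and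
coprime to the absolute value of the integer coded by its first component. -/
def IsRatCode (c : ℕ) : Prop := 0 < c.unpair.2 ∧ ((c.unpair.1 + 1) / 2).Coprime c.unpair.2

lemma encode_int_natAbs (z : ℤ) : (encode z + 1) / 2 = z.natAbs := by
  cases z with
  | ofNat n => change (2 * n + 1) / 2 = n; omega
  | negSucc n => change (2 * n + 1 + 1) / 2 = n + 1; omega

lemma encode_int_toNat (z : ℤ) : (if encode z % 2 = 0 then encode z / 2 else 0) = z.toNat := by
  cases z with
  | ofNat n => change (if (2 * n) % 2 = 0 then (2 * n) / 2 else 0) = n; simp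
  | negSucc n => change (if (2 * n + 1) % 2 = 0 then _ else 0) = 0; simp

lemma encodable_rat (q : ℚ) : @encode ℚ Rat.instEncodable q = ratCode q := rfl

lemma isRatCode_iff (c : ℕ) : c ∈ Set.range (@encode ℚ Rat.instEncodable) ↔ IsRatCode c := by
  constructor
  · rintro ⟨q, rfl⟩
    rw [encodable_rat]
    refine ⟨?_, ?_⟩
    · simpa [ratCode] using q.pos
    · simpa [ratCode, encode_int_natAbs] using q.reduced
  · rintro ⟨h1, h2⟩
    obtain ⟨z, hz⟩ : ∃ z : ℤ, encode z = c.unpair.1 :=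
      ⟨Equiv.intEquivNat.symm c.unpair.1, Equiv.intEquivNat.apply_symm_apply _⟩
    rw [← hz, encode_int_natAbs] at h2
    refine ⟨⟨z, c.unpair.2, h1.ne', h2⟩, ?_⟩
    rw [encodable_rat, ratCode]
    simp [hz]

/-- Mathlib's `Denumerable ℚ` lists the rationals in increasing order of `ratCode`. -/
lemma ratCode_ofNat : ∃ (h : Infinite (Set.range (@encode ℚ Rat.instEncodable))), ∀ n,
    ratCode (ofNat ℚ n) = @Nat.Subtype.ofNat (Set.range (@encode ℚ Rat.instEncodable))
      (@decidableRangeEncode ℚ _) h n := by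
  let := @decidableRangeEncode ℚ Rat.instEncodable
  let i1 : Infinite (Set.range (@encode ℚ Rat.instEncodable)) :=
    Infinite.of_injective _ (Equiv.ofInjective _ encode_injective).injective
  refine ⟨i1, fun n => ?_⟩
  let i2 := Nat.Subtype.denumerable (Set.range (@encode ℚ Rat.instEncodable))
  have h1 : ofNat ℚ n = (@equivRangeEncode ℚ Rat.instEncodable).symm (ofNat _ n) :=
    ofEquiv_ofNat _ _ n
  have h2 : ofNat (Set.range (@encode ℚ Rat.instEncodable)) n = Nat.Subtype.ofNat _ n :=
    ofEquiv_ofNat _ _ n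
  rw [h1, h2]
  set t := Nat.Subtype.ofNat (Set.range (@encode ℚ Rat.instEncodable)) n
  exact congrArg Subtype.val ((@equivRangeEncode ℚ Rat.instEncodable).apply_symm_apply t)

/-- The code of the `(n + 1)`-st rational is the least valid code above that of the `n`-th one, so
it is found by unbounded search. -/
lemma ratCode_succ (n : ℕ) : ∃ k, ratCode (ofNat ℚ (n + 1)) = ratCode (ofNat ℚ n) + k + 1 ∧
    IsRatCode (ratCode (ofNat ℚ n) + k + 1) ∧
    ∀ m < k, ¬ IsRatCode (ratCode (ofNat ℚ n) + m + 1) := by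
  obtain ⟨h, H⟩ := ratCode_ofNat
  let := @decidableRangeEncode ℚ Rat.instEncodable
  simp only [← isRatCode_iff, H]
  exact ⟨_, rfl, Nat.find_spec (Nat.Subtype.exists_succ _), fun m hm =>
    Nat.find_min (Nat.Subtype.exists_succ _) hm⟩

lemma primrec_isRatCode : PrimrecPred IsRatCode := by
  have hd : Primrec (fun c : ℕ => c.unpair.2) := Primrec.snd.comp Primrec.unpair
  have hn : Primrec (fun c : ℕ => (c.unpair.1 + 1) / 2) :=
    Primrec.nat_div.comp (Primrec.succ.comp (Primrec.fst.comp Primrec.unpair)) (Primrec.const 2)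
  have hR : PrimrecRel (fun k c : ℕ => c.unpair.2 % k = 0 →
      ((c.unpair.1 + 1) / 2) % k = 0 → k = 1) := by
    have a1 : PrimrecPred (fun p : ℕ × ℕ => p.2.unpair.2 % p.1 = 0) :=
      Primrec.eq.comp (Primrec.nat_mod.comp (hd.comp Primrec.snd) Primrec.fst) (Primrec.const 0)
    have a2 : PrimrecPred (fun p : ℕ × ℕ => ((p.2.unpair.1 + 1) / 2) % p.1 = 0) :=
      Primrec.eq.comp (Primrec.nat_mod.comp (hn.comp Primrec.snd) Primrec.fst) (Primrec.const 0)
    have a3 : PrimrecPred (fun p : ℕ × ℕ => p.1 = 1) :=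
      Primrec.eq.comp Primrec.fst (Primrec.const 1)
    change PrimrecPred (fun p : ℕ × ℕ => p.2.unpair.2 % p.1 = 0 →
      ((p.2.unpair.1 + 1) / 2) % p.1 = 0 → p.1 = 1)
    refine (a1.not.or (a2.not.or a3)).of_eq fun p => ?_
    tauto
  have h1 : PrimrecPred (fun c : ℕ => ∀ k < c.unpair.2 + 1,
      c.unpair.2 % k = 0 → ((c.unpair.1 + 1) / 2) % k = 0 → k = 1) :=
    hR.forall_lt.comp (Primrec.succ.comp hd) Primrec.id
  have h2 : PrimrecPred (fun c : ℕ => 0 < c.unpair.2) :=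
    Primrec.nat_lt.comp (Primrec.const 0) hd
  refine (h2.and h1).of_eq fun c => ?_
  simp only [IsRatCode]
  refine and_congr_right fun hpos => ⟨fun H => ?_, fun H k _ hk1 hk2 => ?_⟩
  · refine H _ (Nat.lt_succ_of_le (Nat.gcd_le_right _ hpos)) ?_ ?_
    · exact Nat.mod_eq_zero_of_dvd (Nat.gcd_dvd_right _ _)
    · exact Nat.mod_eq_zero_of_dvd (Nat.gcd_dvd_left _ _)
  · exact Nat.eq_one_of_dvd_coprimes H (Nat.dvd_of_mod_eq_zero hk2) (Nat.dvd_of_mod_eq_zero hk1)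

/-- Numerator and denominator of a rational are computable for the `Primcodable ℚ` structure, which
comes from `Denumerable ℚ`: starting from the code of the first rational, iterate the search for the
next valid code. -/
lemma computable_ratCode : Computable ratCode := by
  classical
  have hb : Computable (fun c : ℕ => decide (IsRatCode c)) := primrec_isRatCode.decide.to_comp
  have hp : Partrec₂ (fun (c k : ℕ) =>
      (Part.some (decide (IsRatCode (c + k + 1))) : Part Bool)) := by
    have : Primrec (fun p : ℕ × ℕ => p.1 + p.2 + 1) := Primrec.succ.comp Primrec.nat_add
    exact Computable.partrec (hb.comp this.to_comp)
  have hs : Partrec (fun c : ℕ =>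
      (Nat.rfind fun k => Part.some (decide (IsRatCode (c + k + 1)))).map
      fun k => c + k + 1) := by
    refine (Partrec.rfind hp).map ?_
    exact (Primrec.succ.comp Primrec.nat_add).to_comp
  have hrec : Partrec (fun n : ℕ =>
      (n.rec (Part.some (ratCode (ofNat ℚ 0))) fun _ IH => IH.bind fun c =>
        (Nat.rfind fun k => Part.some (decide (IsRatCode (c + k + 1)))).map
          fun k => c + k + 1 : Part ℕ)) := by
    refine Partrec.nat_rec
      (h := fun _ p => (Nat.rfind fun k => Part.some (decide (IsRatCode (p.2 + k + 1)))).map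
        fun k => p.2 + k + 1) Computable.id (Computable.const _) ?_
    exact hs.comp (Computable.snd.comp Computable.snd)
  have h3 : Computable (fun n : ℕ => ratCode (ofNat ℚ n)) := by
    refine hrec.of_eq_tot fun n => ?_
    induction n with
    | zero => exact Part.mem_some _
    | succ n ih =>
      obtain ⟨k, hk, hk1, hk2⟩ := ratCode_succ n
      refine Part.mem_bind ih ?_
      rw [hk]
      refine Part.mem_map _ ?_
      refine Nat.mem_rfind.2 ⟨by simpa using hk1, fun {m} hm => by simpa using hk2 m hm⟩
  exact (h3.comp Computable.encode).of_eq fun q => by rw [ofNat_encode]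

lemma computable_two_pow : Computable (fun n : ℕ => 2 ^ n) := by
  refine Primrec.to_comp ((Primrec.nat_rec₁ (f := fun _ m => 2 * m) 1 ?_).of_eq fun n => ?_)
  · exact Primrec.nat_double.comp Primrec.snd
  · induction n with
    | zero => rfl
    | succ n ih => rw [pow_succ', ← ih]

/-- The number `⌊q⁺ 2 ^ s⌋`, where `q = p (x, 2 ^ s)` and `q⁺` is its positive part, is computable
from `(x, s)`. -/
lemma computable_natApprox {β : Type} [Primcodable β] {p : β × ℕ → ℚ} (hp : Computable p) :
    Computable (fun a : β × ℕ =>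
      (p (a.1, 2 ^ a.2)).num.toNat * 2 ^ a.2 / (p (a.1, 2 ^ a.2)).den) := by
  have hpow : Computable (fun a : β × ℕ => 2 ^ a.2) := computable_two_pow.comp Computable.snd
  have hc : Computable (fun a : β × ℕ => (ratCode (p (a.1, 2 ^ a.2))).unpair) :=
    Computable.unpair.comp (computable_ratCode.comp (hp.comp (Computable.fst.pair hpow)))
  have hnum : Primrec (fun e : ℕ => if e % 2 = 0 then e / 2 else 0) :=
    Primrec.ite
      (Primrec.eq.comp (Primrec.nat_mod.comp Primrec.id (Primrec.const 2)) (Primrec.const 0))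
      (Primrec.nat_div.comp Primrec.id (Primrec.const 2)) (Primrec.const 0)
  have := Primrec.nat_div.to_comp.comp
    (Primrec.nat_mul.to_comp.comp (hnum.to_comp.comp (Computable.fst.comp hc)) hpow)
    (Computable.snd.comp hc)
  refine this.of_eq fun a => ?_
  simp only [ratCode, Nat.unpair_pair, encode_int_toNat]

/-- The bound `2` is the error of the rational approximation, scaled by `2 ^ s`, plus that of the
floor. -/
lemma natApprox_error {r : ℝ} (hr : 0 ≤ r) {q : ℚ} {s : ℕ} (h : |r - q| < 1 / (2 ^ s : ℕ)) :
    |r * 2 ^ s - (q.num.toNat * 2 ^ s / q.den : ℕ)| ≤ 2 := by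
  have h2 : (0 : ℝ) < 2 ^ s := by positivity
  have hd : (0 : ℝ) < q.den := by exact_mod_cast q.pos
  have e1 : |r * 2 ^ s - q * 2 ^ s| < 1 := by
    rw [← sub_mul, abs_mul, abs_of_pos h2]
    push_cast at h
    exact (lt_div_iff₀ h2).1 h
  have e2 : ((q.num.toNat * 2 ^ s / q.den : ℕ) : ℝ) ≤ ((q.num.toNat : ℝ) * 2 ^ s) / q.den := by
    have := @Nat.cast_div_le ℝ _ _ _ (q.num.toNat * 2 ^ s) q.den
    exact_mod_cast this
  have e3 : ((q.num.toNat : ℝ) * 2 ^ s) / q.den < (q.num.toNat * 2 ^ s / q.den : ℕ) + 1 := by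
    rw [div_lt_iff₀ hd]
    have := Nat.lt_div_mul_add (a := q.num.toNat * 2 ^ s) q.pos
    have : q.num.toNat * 2 ^ s < (q.num.toNat * 2 ^ s / q.den + 1) * q.den := by
      rw [add_mul]; omega
    exact_mod_cast this
  rw [abs_le]; rw [abs_lt] at e1
  have hq : (q : ℝ) = q.num / q.den := Rat.cast_def q
  rcases le_total 0 q.num with h0 | h0
  · have : (q : ℝ) = q.num.toNat / q.den := by
      rw [hq]; congr 1
      have : (q.num.toNat : ℤ) = q.num := Int.toNat_of_nonneg h0
      exact_mod_cast this.symm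
    have : ((q.num.toNat : ℝ) * 2 ^ s) / q.den = q * 2 ^ s := by rw [this]; ring
    constructor <;> linarith
  · have hq0 : (q : ℝ) ≤ 0 := by exact_mod_cast Rat.num_nonpos.1 h0
    have : q.num.toNat = 0 := Int.toNat_of_nonpos h0
    have h3 : (q : ℝ) * 2 ^ s ≤ 0 := mul_nonpos_of_nonpos_of_nonneg hq0 h2.le
    have h4 : 0 ≤ r * 2 ^ s := by positivity
    simp only [this, zero_mul, Nat.zero_div, Nat.cast_zero, sub_zero]
    constructor <;> linarith

end RatCode

/-! ### Certifying strict inequalities between cylinder probabilities -/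

/-- `A` is a computable natural-number approximation of the cylinder probabilities of `P`: `A (x, s)`
is within `2` of `2 ^ s * P(x)`. -/
def Approx (P : Measure Seq) (A : S × ℕ → ℕ) : Prop :=
  Computable A ∧ ∀ x s, |P.real (cyl x) * 2 ^ s - A (x, s)| ≤ 2

lemma exists_approx {P : Measure Seq} (hP : ComputableProb P) : ∃ A, Approx P A := by
  obtain ⟨-, p, hp, h⟩ := hP
  exact ⟨_, computable_natApprox hp, fun x s =>
    natApprox_error measureReal_nonneg (h x (2 ^ s) (by positivity))⟩

/-- The test at precision `s` that certifies `c * P(x) ≤ d * Q(x)` at `a = (x, s)`, where `A` and `B`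
approximate `P` and `Q`; the terms `2 * c` and `2 * d` absorb the approximation errors. -/
def cert (A B : S × ℕ → ℕ) (c d : ℕ) (a : S × ℕ) : Bool :=
  decide (c * (A a + 2) + 2 * d < d * B a)

lemma computable_cert {α : Type} [Primcodable α] {A B : S × ℕ → ℕ} (hA : Computable A)
    (hB : Computable B) {c d : α → ℕ} {f : α → S × ℕ} (hc : Computable c) (hd : Computable d)
    (hf : Computable f) : Computable (fun a => cert A B (c a) (d a) (f a)) := by
  have hlt : Computable₂ (fun m n : ℕ => decide (m < n)) := Primrec.nat_lt.decide.to_comp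
  have add := Primrec.nat_add.to_comp
  have mul := Primrec.nat_mul.to_comp
  exact hlt.comp (add.comp (mul.comp hc (add.comp (hA.comp hf) (Computable.const 2)))
    (mul.comp (Computable.const 2) hd)) (mul.comp hd (hB.comp hf))

lemma cert_sound {P Q : Measure Seq} {A B : S × ℕ → ℕ} (hA : Approx P A) (hB : Approx Q B)
    {c d : ℕ} {x : S} {s : ℕ} (h : cert A B c d (x, s) = true) :
    c * P.real (cyl x) ≤ d * Q.real (cyl x) := by
  have h1 : (c * (A (x, s) + 2) + 2 * d : ℝ) < d * B (x, s) := by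
    exact_mod_cast of_decide_eq_true h
  have h2 := (abs_le.1 (hA.2 x s)).2
  have h3 := (abs_le.1 (hB.2 x s)).1
  have hc : (0 : ℝ) ≤ c := c.cast_nonneg
  have hd : (0 : ℝ) ≤ d := d.cast_nonneg
  have hs : (0 : ℝ) < 2 ^ s := by positivity
  have h4 := mul_le_mul_of_nonneg_left h2 hc
  have h5 := mul_le_mul_of_nonneg_left h3 hd
  refine le_of_mul_le_mul_right ?_ hs
  linarith

/-- A strict inequality is certified at all sufficiently high precisions. -/
lemma cert_complete {P Q : Measure Seq} {A B : S × ℕ → ℕ} (hA : Approx P A) (hB : Approx Q B)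
    {c d : ℕ} {x : S} (h : c * P.real (cyl x) < d * Q.real (cyl x)) :
    ∀ᶠ s in atTop, cert A B c d (x, s) = true := by
  have ht : Tendsto (fun s : ℕ => (d * Q.real (cyl x) - c * P.real (cyl x)) * (2 : ℝ) ^ s)
      atTop atTop :=
    (tendsto_pow_atTop_atTop_of_one_lt one_lt_two).const_mul_atTop (sub_pos.2 h)
  filter_upwards [ht.eventually_gt_atTop (4 * c + 4 * d : ℝ)] with s hs
  have h2 := (abs_le.1 (hA.2 x s)).1
  have h3 := (abs_le.1 (hB.2 x s)).2
  have hc : (0 : ℝ) ≤ c := c.cast_nonneg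
  have hd : (0 : ℝ) ≤ d := d.cast_nonneg
  have h4 := mul_le_mul_of_nonneg_left h2 hc
  have h5 := mul_le_mul_of_nonneg_left h3 hd
  have h1 : (c * (A (x, s) + 2) + 2 * d : ℝ) < d * B (x, s) := by linarith
  refine decide_eq_true ?_
  exact_mod_cast h1

/-! ### Tests bounding the likelihood ratio and transferring randomness -/

lemma not_random_of_null {P : Measure Seq} [IsProbabilityMeasure P] {ω : Seq} {n : ℕ}
    (h : P.real (cyl (seqTake ω n)) = 0) : ¬ Random1 P ω := by
  have hg : Computable (fun a : (ℕ × S) × ℕ => decide (a.1.2 = seqTake ω n)) :=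
    (Primrec.eq.decide.comp (Primrec.snd.comp Primrec.fst) (Primrec.const _)).to_comp
  refine not_random_of_weak_test hg (fun k => ?_) fun k => ⟨n, 0, by simp⟩
  have : hull {x | ∃ _s : ℕ, decide (x = seqTake ω n) = true} = cyl (seqTake ω n) := by
    simp [hull]
  simp only [this, h]
  positivity

/-- Maximal inequality as a test: the strings with `2 ^ n * P(x) ≤ Q(x)` generate a set of
`P`-probability at most `2 ^ (-n)`. -/
lemma not_random_of_ratio_unbounded {P Q : Measure Seq} (hP : ComputableProb P)
    (hQ : ComputableProb Q) {ω : Seq}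
    (h : ∀ n : ℕ, ∃ j, 2 ^ n * P.real (cyl (seqTake ω j)) < Q.real (cyl (seqTake ω j))) :
    ¬ Random1 P ω := by
  obtain ⟨A, hA⟩ := exists_approx hP
  obtain ⟨B, hB⟩ := exists_approx hQ
  have := hP.1
  have := hQ.1
  refine not_random_of_weak_test (g := fun a => cert A B (2 ^ a.1.1) 1 (a.1.2, a.2)) ?_
    (fun n => ?_) fun n => ?_
  · exact computable_cert hA.1 hB.1
      (computable_two_pow.comp (Computable.fst.comp Computable.fst)) (Computable.const 1)
      ((Computable.snd.comp Computable.fst).pair Computable.snd)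
  · have h1 := hull_real_le P Q (2 ^ n) 1 {x | ∃ s, cert A B (2 ^ n) 1 (x, s) = true}
      fun y ⟨s, hs⟩ => cert_sound hA hB hs
    push_cast at h1
    have h2 : Q.real (hull {x | ∃ s, cert A B (2 ^ n) 1 (x, s) = true}) ≤ 1 := measureReal_le_one
    rw [one_div, inv_pow, ← one_div, le_div_iff₀ (by positivity)]
    linarith
  · obtain ⟨j, hj⟩ := h n
    obtain ⟨s, hs⟩ := (cert_complete hA hB (c := 2 ^ n) (d := 1) (by simpa using hj)).exists
    exact ⟨j, s, hs⟩

/-- If `P < 2 ^ k * Q` eventually along `ω`, a `Q`-test catching `ω`, restricted at level `n + k`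
to extensions of its strings satisfying this inequality, is a `P`-test still catching `ω`. -/
lemma random_of_ratio_pos {P Q : Measure Seq} (hP : ComputableProb P) (hQ : ComputableProb Q)
    {ω : Seq} (hω : Random1 P ω) {k : ℕ}
    (h : ∀ᶠ j in atTop, P.real (cyl (seqTake ω j)) < 2 ^ k * Q.real (cyl (seqTake ω j))) :
    Random1 Q ω := by
  rintro U ⟨⟨e, he, hUe⟩, -, hU⟩ hmem
  obtain ⟨A, hA⟩ := exists_approx hP
  obtain ⟨B, hB⟩ := exists_approx hQ
  have := hP.1
  have := hQ.1
  have hUmem : ∀ n x, (n, x) ∈ U ↔ ∃ i, e i = some (n, x) := fun n x => by rw [hUe]; rfl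
  -- The stage codes an index `i` of the enumeration `e` of `U` and a precision `s`.
  let g : (ℕ × S) × ℕ → Bool := fun a =>
    match e a.2.unpair.1 with
    | none => false
    | some b => (decide (b.1 = a.1.1 + k) && decide (b.2 = a.1.2.take b.2.length)) &&
        cert A B 1 (2 ^ k) (a.1.2, a.2.unpair.2)
  have hgspec : ∀ n y i s, g ((n, y), Nat.pair i s) = true ↔
      ∃ x, e i = some (n + k, x) ∧ x <+: y ∧ cert A B 1 (2 ^ k) (y, s) = true := by
    intro n y i s
    simp only [g, Nat.unpair_pair]
    cases hei : e i with
    | none => simp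
    | some b =>
      obtain ⟨m, x⟩ := b
      simp only [Bool.and_eq_true, decide_eq_true_eq, Option.some.injEq, Prod.mk.injEq,
        List.prefix_iff_eq_take]
      constructor
      · rintro ⟨⟨rfl, h2⟩, h3⟩; exact ⟨x, ⟨rfl, rfl⟩, h2, h3⟩
      · rintro ⟨_, ⟨rfl, rfl⟩, h2, h3⟩; exact ⟨⟨rfl, h2⟩, h3⟩
  have hg : Computable g := by
    have hy : Primrec (fun p : ((ℕ × S) × ℕ) × (ℕ × S) => p.1.1.2) :=
      Primrec.snd.comp (Primrec.fst.comp Primrec.fst)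
    have hx : Primrec (fun p : ((ℕ × S) × ℕ) × (ℕ × S) => p.2.2) :=
      Primrec.snd.comp Primrec.snd
    have hn : Primrec (fun p : ((ℕ × S) × ℕ) × (ℕ × S) => p.1.1.1) :=
      Primrec.fst.comp (Primrec.fst.comp Primrec.fst)
    have c1 : Primrec (fun p : ((ℕ × S) × ℕ) × (ℕ × S) => decide (p.2.1 = p.1.1.1 + k)) :=
      Primrec.eq.decide.comp (Primrec.fst.comp Primrec.snd)
        (Primrec.nat_add.comp hn (Primrec.const k))
    have c2 : Primrec (fun p : ((ℕ × S) × ℕ) × (ℕ × S) =>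
        decide (p.2.2 = p.1.1.2.take p.2.2.length)) :=
      Primrec.eq.decide.comp hx (Primrec.list_take.comp (Primrec.list_length.comp hx) hy)
    have c3 : Computable (fun p : ((ℕ × S) × ℕ) × (ℕ × S) =>
        cert A B 1 (2 ^ k) (p.1.1.2, p.1.2.unpair.2)) :=
      computable_cert hA.1 hB.1 (Computable.const 1) (Computable.const _)
        (hy.to_comp.pair (Primrec.snd.comp
          (Primrec.unpair.comp (Primrec.snd.comp Primrec.fst))).to_comp)
    have := Computable.option_casesOn
      (he.comp (Computable.fst.comp (Computable.unpair.comp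
        (Computable.snd (α := ℕ × S) (β := ℕ)))))
      (Computable.const false) (Primrec.and.to_comp.comp (Primrec.and.comp c1 c2).to_comp c3).to₂
    refine this.of_eq fun a => ?_
    simp only [g]
    cases e a.2.unpair.1 <;> rfl
  refine not_random_of_weak_test hg (fun n => ?_) (fun n => ?_) hω
  · set Y : Set S := {x | ∃ s, g ((n, x), s) = true} with hY
    have hYspec : ∀ y ∈ Y, ∃ x s, (n + k, x) ∈ U ∧ x <+: y ∧ cert A B 1 (2 ^ k) (y, s) = true := by
      rintro y ⟨t, ht⟩
      rw [← Nat.pair_unpair t, hgspec] at ht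
      obtain ⟨x, h1, h2, h3⟩ := ht
      exact ⟨x, _, (hUmem _ _).2 ⟨_, h1⟩, h2, h3⟩
    have h1 := hull_real_le P Q 1 (2 ^ k) Y fun y hy => by
      obtain ⟨x, s, -, -, h3⟩ := hYspec y hy
      exact cert_sound hA hB h3
    have h2 : hull Y ⊆ testUnion cyl U (n + k) := by
      refine iUnion₂_subset fun y hy => ?_
      obtain ⟨x, s, hx, h2, -⟩ := hYspec y hy
      exact (cyl_anti h2).trans (subset_biUnion_of_mem (u := cyl) hx)
    have h3 : Q.real (hull Y) ≤ (1 / 2) ^ (n + k) := by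
      refine (measureReal_mono h2).trans ?_
      rw [Measure.real]
      refine (ENNReal.toReal_mono (by simp) (hU (n + k)).le).trans_eq ?_
      simp
    push_cast at h1
    calc P.real (hull Y) ≤ 2 ^ k * Q.real (hull Y) := by linarith
      _ ≤ 2 ^ k * (1 / 2) ^ (n + k) := by gcongr
      _ = (1 / 2) ^ n := by
        rw [pow_add, mul_comm, mul_assoc, ← mul_pow]; norm_num
  · have h1 : ω ∈ hull {x | (n + k, x) ∈ U} := mem_iInter.1 hmem (n + k)
    obtain ⟨m, hm⟩ := mem_hull.1 h1
    obtain ⟨i, hi⟩ := (hUmem _ _).1 hm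
    obtain ⟨j, hj, hmj⟩ := (h.and (eventually_ge_atTop m)).exists
    obtain ⟨s, hs⟩ := (cert_complete hA hB (c := 1) (d := 2 ^ k) (by simpa using hj)).exists
    exact ⟨j, Nat.pair i s, (hgspec _ _ _ _).2 ⟨_, hi, seqTake_prefix ω hmj, hs⟩⟩

/-! ### The upcrossing test -/

/-- `chain h k` is the set of last members of sequences `x₁ ⊑ ⋯ ⊑ x_k` of strings such that
`x_{i+1}` is certified by `h` at level `i`, at some precision; it is everything for `k = 0`. -/
def chain (h : (ℕ × S) × ℕ → Bool) : ℕ → Set S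
  | 0 => Set.univ
  | k + 1 => {y | (∃ s, h ((k, y), s) = true) ∧ ∃ x ∈ chain h k, x <+: y}

/-- The greedy number of levels of `chain h` passed by the first `j` prefixes of `a.1` (of lengths
`0, …, j - 1`), when certificates are looked up at the single precision `a.2`. The greedy count
replaces the existential quantifiers over chains by a primitive recursion. -/
def progress (h : (ℕ × S) × ℕ → Bool) (a : S × ℕ) (j : ℕ) : ℕ :=
  Nat.rec 0 (fun j k => cond (h ((k, a.1.take j), a.2)) (k + 1) k) j

lemma progress_succ (h : (ℕ × S) × ℕ → Bool) (a : S × ℕ) (j : ℕ) :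
    progress h a (j + 1) =
      cond (h ((progress h a j, a.1.take j), a.2)) (progress h a j + 1) (progress h a j) := rfl

lemma progress_le_succ (h : (ℕ × S) × ℕ → Bool) (a : S × ℕ) (j : ℕ) :
    progress h a j ≤ progress h a (j + 1) := by
  rw [progress_succ]; cases h ((progress h a j, a.1.take j), a.2) <;> simp

lemma computable_progress {h : (ℕ × S) × ℕ → Bool} (hh : Computable h) :
    Computable (fun a : S × ℕ => progress h a (a.1.length + 1)) := by
  have hk : Computable (fun p : (S × ℕ) × (ℕ × ℕ) => p.2.2) := Computable.snd.comp Computable.snd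
  have ht : Computable (fun p : (S × ℕ) × (ℕ × ℕ) => p.1.1.take p.2.1) :=
    (Primrec.list_take.comp (Primrec.fst.comp Primrec.snd)
      (Primrec.fst.comp Primrec.fst)).to_comp
  have hs : Computable (fun p : (S × ℕ) × (ℕ × ℕ) => p.1.2) := Computable.snd.comp Computable.fst
  exact Computable.nat_rec
    (h := fun a p => cond (h ((p.2, a.1.take p.1), a.2)) (p.2 + 1) p.2)
    (Computable.succ.comp (Computable.list_length.comp Computable.fst)) (Computable.const 0)
    (Computable.cond (hh.comp ((hk.pair ht).pair hs)) (Computable.succ.comp hk) hk).to₂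

/-- A count of at least `k` is witnessed by a prefix lying in the `k`-th level of the chain. -/
lemma mem_chain_of_progress {h : (ℕ × S) × ℕ → Bool} {a : S × ℕ} {j k : ℕ}
    (hk : k ≤ progress h a j) : ∃ i ≤ j, a.1.take i ∈ chain h k := by
  induction j generalizing k with
  | zero =>
    have : k = 0 := Nat.le_zero.1 hk
    subst this
    exact ⟨0, le_rfl, trivial⟩
  | succ j ih =>
    rw [progress_succ] at hk
    cases hc : h ((progress h a j, a.1.take j), a.2) with
    | false =>
      obtain ⟨i, hi, hm⟩ := ih (by simpa [hc] using hk)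
      exact ⟨i, by omega, hm⟩
    | true =>
      rw [hc, cond_true] at hk
      rcases Nat.lt_or_ge (progress h a j) k with hlt | hge
      · obtain rfl : k = progress h a j + 1 := by omega
        obtain ⟨i, hi, hm⟩ := ih le_rfl
        exact ⟨j, by omega, ⟨a.2, hc⟩, _, hm, List.take_prefix_take_left hi⟩
      · obtain ⟨i, hi, hm⟩ := ih hge
        exact ⟨i, by omega, hm⟩

/-- If along `ω` every level is certified infinitely often, the greedy count reaches any `k`. The
finitely many certificates needed all appear once the precision is high enough. -/
lemma exists_progress {h : (ℕ × S) × ℕ → Bool} {ω : Seq}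
    (H : ∀ k, ∃ᶠ j in atTop, ∀ᶠ s in atTop, h ((k, seqTake ω j), s) = true) (k : ℕ) :
    ∃ j, ∀ᶠ s in atTop, ∀ n, j ≤ n + 1 → k ≤ progress h (seqTake ω n, s) j := by
  induction k with
  | zero => exact ⟨0, Eventually.of_forall fun _ _ _ => Nat.zero_le _⟩
  | succ k ih =>
    obtain ⟨j, hj⟩ := ih
    obtain ⟨j', hj', hge⟩ := ((H k).and_eventually (eventually_ge_atTop j)).exists
    refine ⟨j' + 1, ?_⟩
    filter_upwards [hj, hj'] with s h1 h2 n hn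
    have h3 : k ≤ progress h (seqTake ω n, s) j' :=
      (h1 n (by omega)).trans (monotone_nat_of_le_succ (progress_le_succ h _) hge)
    rcases h3.lt_or_eq with h4 | h4
    · exact (Nat.succ_le_of_lt h4).trans (progress_le_succ h _ _)
    · rw [progress_succ, ← h4]
      simp only [seqTake_take ω (by omega : j' ≤ n), h2, cond_true, le_refl]

/-- The ratio `Q / P` cannot be below `a / c` and above `b / c` infinitely often along a `P`-random
sequence when `a < b`. Levels of the chain alternate between the two inequalities, so each
upcrossing multiplies the `P`-probability by at most `a / b`. -/
lemma not_random_of_oscillation {P Q : Measure Seq} (hP : ComputableProb P)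
    (hQ : ComputableProb Q) {ω : Seq} {a b c : ℕ} (hab : a < b)
    (h1 : ∃ᶠ j in atTop, c * Q.real (cyl (seqTake ω j)) < a * P.real (cyl (seqTake ω j)))
    (h2 : ∃ᶠ j in atTop, b * P.real (cyl (seqTake ω j)) < c * Q.real (cyl (seqTake ω j))) :
    ¬ Random1 P ω := by
  obtain ⟨A, hA⟩ := exists_approx hP
  obtain ⟨B, hB⟩ := exists_approx hQ
  have := hP.1
  have := hQ.1
  let h : (ℕ × S) × ℕ → Bool := fun p =>
    cond p.1.1.bodd (cert A B b c (p.1.2, p.2)) (cert B A c a (p.1.2, p.2))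
  have hh : Computable h := by
    have hf : Computable (fun p : (ℕ × S) × ℕ => (p.1.2, p.2)) :=
      (Computable.snd.comp Computable.fst).pair Computable.snd
    exact Computable.cond (Computable.nat_bodd.comp (Computable.fst.comp Computable.fst))
      (computable_cert hA.1 hB.1 (Computable.const b) (Computable.const c) hf)
      (computable_cert hB.1 hA.1 (Computable.const c) (Computable.const a) hf)
  have hsub : ∀ k, hull (chain h (k + 1)) ⊆ hull (chain h k) := fun k =>
    iUnion₂_subset fun y ⟨_, x, hx, hxy⟩ =>
      (cyl_anti hxy).trans (subset_biUnion_of_mem (u := cyl) hx)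
  -- Two levels cost `b * P(new) ≤ c * Q(new) ≤ c * Q(mid) ≤ a * P(mid) ≤ a * P(old)`.
  have hbound : ∀ k, (b : ℝ) ^ k * P.real (hull (chain h (2 * k))) ≤ a ^ k := by
    intro k
    induction k with
    | zero => simp
    | succ k ih =>
      have e1 : b * P.real (hull (chain h (2 * k + 1 + 1)))
          ≤ c * Q.real (hull (chain h (2 * k + 1 + 1))) := by
        refine hull_real_le P Q b c _ fun y ⟨⟨s, hs⟩, _⟩ => cert_sound hA hB (s := s) ?_
        simpa [h] using hs
      have e2 : c * Q.real (hull (chain h (2 * k + 1)))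
          ≤ a * P.real (hull (chain h (2 * k + 1))) := by
        refine hull_real_le Q P c a _ fun y ⟨⟨s, hs⟩, _⟩ => cert_sound hB hA (s := s) ?_
        simpa [h] using hs
      have e3 : Q.real (hull (chain h (2 * k + 1 + 1))) ≤ Q.real (hull (chain h (2 * k + 1))) :=
        measureReal_mono (hsub _)
      have e4 : P.real (hull (chain h (2 * k + 1))) ≤ P.real (hull (chain h (2 * k))) :=
        measureReal_mono (hsub _)
      have hc : (0 : ℝ) ≤ c := c.cast_nonneg
      have ha : (0 : ℝ) ≤ a := a.cast_nonneg
      have e5 : b * P.real (hull (chain h (2 * k + 1 + 1))) ≤ a * P.real (hull (chain h (2 * k))) :=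
        e1.trans ((mul_le_mul_of_nonneg_left e3 hc).trans
          (e2.trans (mul_le_mul_of_nonneg_left e4 ha)))
      calc (b : ℝ) ^ (k + 1) * P.real (hull (chain h (2 * k + 1 + 1)))
          = b ^ k * (b * P.real (hull (chain h (2 * k + 1 + 1)))) := by ring
        _ ≤ b ^ k * (a * P.real (hull (chain h (2 * k)))) := by gcongr
        _ = a * (b ^ k * P.real (hull (chain h (2 * k)))) := by ring
        _ ≤ a * a ^ k := by gcongr
        _ = a ^ (k + 1) := by ring
  have hb : (0 : ℝ) < b := by exact_mod_cast (Nat.zero_le a).trans_lt hab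
  obtain ⟨m, hm⟩ : ∃ m : ℕ, ((a : ℝ) / b) ^ m < 1 / 2 :=
    exists_pow_lt_of_lt_one (by norm_num) ((div_lt_one hb).2 (by exact_mod_cast hab))
  refine not_random_of_weak_test
    (g := fun p => decide (2 * (m * p.1.1) ≤ progress h (p.1.2, p.2) (p.1.2.length + 1)))
    ?_ (fun n => ?_) fun n => ?_
  · have hle : Computable₂ (fun m n : ℕ => decide (m ≤ n)) := Primrec.nat_le.decide.to_comp
    refine hle.comp (Primrec.to_comp ?_) ((computable_progress hh).comp
      ((Computable.snd.comp Computable.fst).pair Computable.snd))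
    exact Primrec.nat_double.comp (Primrec.nat_mul.comp (Primrec.const m)
      (Primrec.fst.comp Primrec.fst))
  · have e1 : hull {x | ∃ s, decide (2 * (m * n) ≤ progress h (x, s) (x.length + 1)) = true}
        ⊆ hull (chain h (2 * (m * n))) := by
      refine iUnion₂_subset fun y ⟨s, hs⟩ => ?_
      obtain ⟨i, -, hi⟩ := mem_chain_of_progress (of_decide_eq_true hs)
      exact (cyl_anti (List.take_prefix _ _)).trans (subset_biUnion_of_mem (u := cyl) hi)
    refine (measureReal_mono e1).trans ?_
    have e2 : P.real (hull (chain h (2 * (m * n)))) ≤ ((a : ℝ) / b) ^ (m * n) := by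
      rw [div_pow, le_div_iff₀ (by positivity), mul_comm]
      exact hbound _
    refine e2.trans ?_
    rw [pow_mul]
    exact pow_le_pow_left₀ (by positivity) hm.le n
  · have H : ∀ k, ∃ᶠ j in atTop, ∀ᶠ s in atTop, h ((k, seqTake ω j), s) = true := by
      intro k
      cases hk : k.bodd with
      | true =>
        refine h2.mono fun j hj => (cert_complete hA hB hj).mono fun s hs => ?_
        simpa [h, hk] using hs
      | false =>
        refine h1.mono fun j hj => (cert_complete hB hA hj).mono fun s hs => ?_
        simpa [h, hk] using hs
    obtain ⟨j, hj⟩ := exists_progress H (2 * (m * n))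
    obtain ⟨s, hs⟩ := hj.exists
    refine ⟨j, s, decide_eq_true ?_⟩
    rw [length_seqTake]
    exact (hs j (by omega)).trans (progress_le_succ _ _ _)

/-! ### Convergence of the likelihood ratio -/

lemma random_pos {P : Measure Seq} (hP : ComputableProb P) {ω : Seq} (hω : Random1 P ω) (n : ℕ) :
    0 < P.real (cyl (seqTake ω n)) := by
  have := hP.1
  exact measureReal_nonneg.lt_of_ne fun h => not_random_of_null h.symm hω

/-- Along a `P`-random sequence the likelihood ratio converges to a finite limit. -/
lemma exists_tendsto {P Q : Measure Seq} (hP : ComputableProb P) (hQ : ComputableProb Q) {ω : Seq}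
    (hω : Random1 P ω) :
    ∃ L : ℝ, 0 ≤ L ∧ Tendsto (fun n => ratio P Q (seqTake ω n)) atTop (nhds L) := by
  have hpos := random_pos hP hω
  have h0 : ∀ n, 0 ≤ ratio P Q (seqTake ω n) := fun n =>
    div_nonneg ENNReal.toReal_nonneg ENNReal.toReal_nonneg
  have hbd : ∃ k : ℕ, ∀ j, ratio P Q (seqTake ω j) ≤ 2 ^ k := by
    by_contra! hcon
    refine not_random_of_ratio_unbounded hP hQ (fun n => ?_) hω
    obtain ⟨j, hj⟩ := hcon n
    exact ⟨j, (lt_div_iff₀ (hpos j)).1 hj⟩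
  obtain ⟨K, hK⟩ := hbd
  -- For rationals `p < q` the bounds `p` and `q` are brought to the common denominator
  -- `p.den * q.den`, and positivity of the ratio forces `0 < p`.
  obtain ⟨L, hL⟩ := tendsto_of_no_upcrossings (f := atTop)
    (u := fun n => ratio P Q (seqTake ω n)) (Rat.denseRange_cast (𝕜 := ℝ)) (by
      rintro _ ⟨p, rfl⟩ _ ⟨q, rfl⟩ hpq ⟨hlow, hhigh⟩
      have hp0 : 0 < p := by
        obtain ⟨n, hn⟩ := hlow.exists
        exact_mod_cast (h0 n).trans_lt hn
      have hpq' : p < q := by exact_mod_cast hpq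
      have hq0 := hp0.trans hpq'
      have hpd : (0 : ℝ) < p.den := by exact_mod_cast p.pos
      have hqd : (0 : ℝ) < q.den := by exact_mod_cast q.pos
      have hpn : (p : ℝ) * p.den = p.num.toNat := by
        have h : ((p.num.toNat : ℤ) : ℚ) = p * p.den := by
          rw [Int.toNat_of_nonneg (Rat.num_nonneg.2 hp0.le), Rat.mul_den_eq_num]
        exact_mod_cast h.symm
      have hqn : (q : ℝ) * q.den = q.num.toNat := by
        have h : ((q.num.toNat : ℤ) : ℚ) = q * q.den := by
          rw [Int.toNat_of_nonneg (Rat.num_nonneg.2 hq0.le), Rat.mul_den_eq_num]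
        exact_mod_cast h.symm
      refine not_random_of_oscillation hP hQ (a := p.num.toNat * q.den)
        (b := q.num.toNat * p.den) (c := p.den * q.den) ?_ ?_ ?_ hω
      · have : ((p.num.toNat * q.den : ℕ) : ℝ) < (q.num.toNat * p.den : ℕ) := by
          push_cast
          rw [← hpn, ← hqn]
          have := mul_lt_mul_of_pos_right hpq (mul_pos hpd hqd)
          linarith
        exact_mod_cast this
      · refine hlow.mono fun j hj => ?_
        have h1 := mul_lt_mul_of_pos_right ((div_lt_iff₀ (hpos j)).1 hj) (mul_pos hpd hqd)
        push_cast
        rw [← hpn]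
        simp only [Measure.real] at h1 ⊢
        linarith
      · refine hhigh.mono fun j hj => ?_
        have h1 := mul_lt_mul_of_pos_right ((lt_div_iff₀ (hpos j)).1 hj) (mul_pos hpd hqd)
        push_cast
        rw [← hqn]
        simp only [Measure.real] at h1 ⊢
        linarith)
    (isBoundedUnder_of ⟨2 ^ K, hK⟩) (isBoundedUnder_of ⟨0, h0⟩)
  exact ⟨L, ge_of_tendsto' hL h0, hL⟩

lemma random_of_tendsto_pos {P Q : Measure Seq} (hP : ComputableProb P) (hQ : ComputableProb Q)
    {ω : Seq} (hω : Random1 P ω) {L : ℝ} (hL : 0 < L)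
    (h : Tendsto (fun n => ratio P Q (seqTake ω n)) atTop (nhds L)) : Random1 Q ω := by
  obtain ⟨k, hk⟩ := exists_pow_lt_of_lt_one hL (by norm_num : (1 / 2 : ℝ) < 1)
  refine random_of_ratio_pos hP hQ hω (k := k) ?_
  filter_upwards [h.eventually_const_lt hk] with j hj
  have h1 := (lt_div_iff₀ (random_pos hP hω j)).1 hj
  rw [one_div, inv_pow, inv_mul_lt_iff₀ (by positivity)] at h1
  exact h1

/-- When `Q / P` tends to `0`, the inverse ratio `P / Q` is unbounded, and the maximal inequality for
`P` with respect to `Q` applies. Only `P(x) > 0` is needed, so `Q(x) = 0` is allowed. -/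
lemma not_random_of_tendsto_zero {P Q : Measure Seq} (hP : ComputableProb P)
    (hQ : ComputableProb Q) {ω : Seq} (hω : Random1 P ω)
    (h : Tendsto (fun n => ratio P Q (seqTake ω n)) atTop (nhds 0)) : ¬ Random1 Q ω := by
  refine not_random_of_ratio_unbounded hQ hP fun n => ?_
  obtain ⟨j, hj⟩ := (h.eventually_lt_const (u := (2 ^ n : ℝ)⁻¹) (by positivity)).exists
  refine ⟨j, ?_⟩
  have h1 := (div_lt_iff₀ (random_pos hP hω j)).1 hj
  rw [lt_inv_mul_iff₀ (by positivity)] at h1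
  exact h1

/-- Lemma 3: classification of random sets by the likelihood ratio:
(a) R^P ∩ R^Q = R^P ∩ {ω : 0 < lim r < ∞}; (b) R^P ∩ (R^Q)^c = R^P ∩ {ω : lim r = 0}. -/
theorem likelihood_ratio_classification (P Q : Measure Seq)
    (hP : ComputableProb P) (hQ : ComputableProb Q) :
    ({ω : Seq | Random1 P ω} ∩ {ω : Seq | Random1 Q ω}
        = {ω : Seq | Random1 P ω} ∩
          {ω : Seq | ∃ L : ℝ, 0 < L ∧
            Tendsto (fun n => ratio P Q (seqTake ω n)) atTop (nhds L)}) ∧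
      ({ω : Seq | Random1 P ω} ∩ {ω : Seq | Random1 Q ω}ᶜ
        = {ω : Seq | Random1 P ω} ∩
          {ω : Seq | Tendsto (fun n => ratio P Q (seqTake ω n)) atTop (nhds 0)}) := by
  constructor
  · ext ω
    refine and_congr_right fun hω => ⟨fun hωQ => ?_, fun ⟨L, hL, h⟩ =>
      random_of_tendsto_pos hP hQ hω hL h⟩
    obtain ⟨L, hL, h⟩ := exists_tendsto hP hQ hω
    refine ⟨L, hL.lt_of_ne ?_, h⟩
    rintro rfl
    exact not_random_of_tendsto_zero hP hQ hω h hωQ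
  · ext ω
    refine and_congr_right fun hω => ⟨fun hωQ => ?_, fun h =>
      not_random_of_tendsto_zero hP hQ hω h⟩
    obtain ⟨L, hL, h⟩ := exists_tendsto hP hQ hω
    rcases hL.eq_or_lt with rfl | hL
    · exact h
    · exact absurd (random_of_tendsto_pos hP hQ hω hL h) hωQ

end AlgRand
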